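/- arXiv:2410.00879 — 4 statements merged into one kernel-verified Lean document; each statement's English description precedes it below -/
import Mathlib

section
/- Let H and K be complex Hilbert spaces, V ⊆ H and W ⊆ K closed subspaces, Q : H ≃ₗᵢ[ℂ] K a unitary operator, and Q₊₊, Q₋₋, Q₊₋, Q₋₊ its compressions. Then Q₊₋ restricts to a bijection from ker Q₋₋ onto ker(Q₊₊†): the restriction of Q₊₋ to ker Q₋₋ ⊆ Vᗮ is injective and its image is exactly the kernel of the adjoint Q₊₊† : W →L[ℂ] V. Likewise, Q₋₊ restricts to a bijection from ker Q₊₊ onto ker(Q₋₋†). -/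
noncomputable section

variable {H K : Type*}
  [NormedAddCommGroup H] [InnerProductSpace ℂ H] [CompleteSpace H]
  [NormedAddCommGroup K] [InnerProductSpace ℂ K] [CompleteSpace K]

/-- The compression `Q₊₊ : V → W`, `u ↦ P_W (Q u)`. -/
def Qpp (V : Submodule ℂ H) (W : Submodule ℂ K) [CompleteSpace W] (Q : H ≃ₗᵢ[ℂ] K) :
    V →L[ℂ] W :=
  (Submodule.orthogonalProjectionOnto W).comp (Q.toLinearIsometry.toContinuousLinearMap.comp V.subtypeL)

/-- The compression `Q₋₋ : Vᗮ → Wᗮ`, `u ↦ P_{Wᗮ} (Q u)`. -/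
def Qmm (V : Submodule ℂ H) (W : Submodule ℂ K) [CompleteSpace W] (Q : H ≃ₗᵢ[ℂ] K) :
    Vᗮ →L[ℂ] Wᗮ :=
  (Submodule.orthogonalProjectionOnto Wᗮ).comp (Q.toLinearIsometry.toContinuousLinearMap.comp Vᗮ.subtypeL)

/-- The compression `Q₊₋ : Vᗮ → W`, `u ↦ P_W (Q u)`. -/
def Qpm (V : Submodule ℂ H) (W : Submodule ℂ K) [CompleteSpace W] (Q : H ≃ₗᵢ[ℂ] K) :
    Vᗮ →L[ℂ] W :=
  (Submodule.orthogonalProjectionOnto W).comp (Q.toLinearIsometry.toContinuousLinearMap.comp Vᗮ.subtypeL)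

/-- The compression `Q₋₊ : V → Wᗮ`, `u ↦ P_{Wᗮ} (Q u)`. -/
def Qmp (V : Submodule ℂ H) (W : Submodule ℂ K) [CompleteSpace W] (Q : H ≃ₗᵢ[ℂ] K) :
    V →L[ℂ] Wᗮ :=
  (Submodule.orthogonalProjectionOnto Wᗮ).comp (Q.toLinearIsometry.toContinuousLinearMap.comp V.subtypeL)

/-!
A vector `u ∈ Vᗮ` lies in `ker Q₋₋` exactly when `Q u ∈ Wᗮᗮ = W`, and on such vectors `Q₊₋` is `Q`
itself, so `Q₊₋` carries `Vᗮ ∩ Q⁻¹ W` bijectively onto `W ∩ Q Vᗮ`. Since `Q† = Q⁻¹`, the adjoint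
`Q₊₊†` is the compression of `Q⁻¹` to `W → V`, whose kernel is `W ∩ Q Vᗮ`. The other case swaps
`V, W` with `Vᗮ, Wᗮ`.
-/

section Compression

variable {𝕜 E F : Type*} [RCLike 𝕜]
  [NormedAddCommGroup E] [InnerProductSpace 𝕜 E] [NormedAddCommGroup F] [InnerProductSpace 𝕜 F]

/-- The compression `P_W ∘ T|_U : U → W` of a bounded operator `T : E → F` to subspaces `U ⊆ E` and
`W ⊆ F`. The blocks `Q₊₊, Q₋₋, Q₊₋, Q₋₊` are the cases `U ∈ {V, Vᗮ}` with target `W` or `Wᗮ`. -/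
def compression (U : Submodule 𝕜 E) (W : Submodule 𝕜 F) [W.HasOrthogonalProjection]
    (T : E →L[𝕜] F) : U →L[𝕜] W :=
  W.orthogonalProjectionOnto ∘L T ∘L U.subtypeL

theorem coe_compression_of_mem {U : Submodule 𝕜 E} {W : Submodule 𝕜 F}
    [W.HasOrthogonalProjection] {T : E →L[𝕜] F} {u : U} (hu : T u ∈ W) :
    (compression U W T u : F) = T u :=
  Submodule.starProjection_eq_self_iff.2 hu

theorem bijOn_compression (U : Submodule 𝕜 E) (W : Submodule 𝕜 F) [W.HasOrthogonalProjection]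
    (T : E ≃L[𝕜] F) :
    Set.BijOn (compression U W T) {u : U | T u ∈ W} {w : W | T.symm w ∈ U} := by
  have coe_apply {u : U} (hu : T u ∈ W) : (compression U W T u : F) = T u :=
    coe_compression_of_mem hu
  refine ⟨fun u hu => ?mapsTo, fun u hu v hv huv => ?injOn, fun w hw => ?surjOn⟩
  case mapsTo =>
    rw [Set.mem_ofPred_eq, coe_apply hu, T.symm_apply_apply]
    exact u.2
  case injOn =>
    apply Subtype.ext
    apply T.injective
    rw [← coe_apply hu, huv, coe_apply hv]
  case surjOn =>
    have apply_symm_mem : T (T.symm w) ∈ W := by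
      rw [T.apply_symm_apply]
      exact w.2
    refine ⟨⟨T.symm w, hw⟩, apply_symm_mem, Subtype.ext ?_⟩
    rw [coe_apply apply_symm_mem, T.apply_symm_apply]

theorem coe_ker_compression (U : Submodule 𝕜 E) (W : Submodule 𝕜 F) [W.HasOrthogonalProjection]
    (T : E →L[𝕜] F) :
    (LinearMap.ker (compression U W T).toLinearMap : Set U) = {u : U | T u ∈ Wᗮ} := by
  ext u
  exact Submodule.orthogonalProjectionOnto_eq_zero_iff (K := W) (v := T u)

variable [CompleteSpace E] [CompleteSpace F]

theorem adjoint_compression (U : Submodule 𝕜 E) (W : Submodule 𝕜 F)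
    [CompleteSpace U] [CompleteSpace W] (T : E →L[𝕜] F) :
    (compression U W T).adjoint = compression W U T.adjoint := by
  simp only [compression, ContinuousLinearMap.adjoint_comp, Submodule.adjoint_subtypeL,
    Submodule.adjoint_orthogonalProjectionOnto, ContinuousLinearMap.comp_assoc]

theorem coe_ker_adjoint_compression (U : Submodule 𝕜 E) (W : Submodule 𝕜 F)
    [CompleteSpace U] [CompleteSpace W] (Q : E ≃ₗᵢ[𝕜] F) :
    (LinearMap.ker (compression U W (Q.toContinuousLinearEquiv : E →L[𝕜] F)).adjoint.toLinearMap :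
      Set W) = {w : W | Q.symm w ∈ Uᗮ} := by
  rw [adjoint_compression, coe_ker_compression, LinearIsometryEquiv.adjoint_eq_symm]
  rfl

theorem offdiagonal_kernel_bijections_general (V : Submodule 𝕜 E) [CompleteSpace V]
    (W : Submodule 𝕜 F) [CompleteSpace W] (Q : E ≃ₗᵢ[𝕜] F) :
    let T : E →L[𝕜] F := Q.toContinuousLinearEquiv
    Set.BijOn (compression Vᗮ W T) (LinearMap.ker (compression Vᗮ Wᗮ T).toLinearMap)
        (LinearMap.ker (compression V W T).adjoint.toLinearMap) ∧
      Set.BijOn (compression V Wᗮ T) (LinearMap.ker (compression V W T).toLinearMap)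
        (LinearMap.ker (compression Vᗮ Wᗮ T).adjoint.toLinearMap) := by
  simp only [coe_ker_compression, coe_ker_adjoint_compression, Submodule.orthogonal_orthogonal]
  exact ⟨bijOn_compression Vᗮ W Q.toContinuousLinearEquiv,
    bijOn_compression V Wᗮ Q.toContinuousLinearEquiv⟩

end Compression

/-- the off-diagonal compression `Q₊₋` restricts to a bijection from
`ker Q₋₋` onto `ker Q₊₊†`, and `Q₋₊` restricts to a bijection from `ker Q₊₊` onto
`ker Q₋₋†`. -/
theorem offdiagonal_kernel_bijections
    (V : Submodule ℂ H) [CompleteSpace V] (W : Submodule ℂ K) [CompleteSpace W]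
    (Q : H ≃ₗᵢ[ℂ] K) :
    (Set.InjOn (Qpm V W Q) (LinearMap.ker (Qmm V W Q).toLinearMap) ∧
      (Qpm V W Q) '' (LinearMap.ker (Qmm V W Q).toLinearMap) =
        (LinearMap.ker (ContinuousLinearMap.adjoint (Qpp V W Q)).toLinearMap : Set W)) ∧
    (Set.InjOn (Qmp V W Q) (LinearMap.ker (Qpp V W Q).toLinearMap) ∧
      (Qmp V W Q) '' (LinearMap.ker (Qpp V W Q).toLinearMap) =
        (LinearMap.ker (ContinuousLinearMap.adjoint (Qmm V W Q)).toLinearMap : Set Wᗮ)) := by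
  obtain ⟨hpm, hmp⟩ := offdiagonal_kernel_bijections_general V W Q
  exact ⟨⟨hpm.injOn, hpm.image_eq⟩, hmp.injOn, hmp.image_eq⟩

end
end

section
/- Let Γ be a group with unitary representations ρ, ρ₁, ρ₂ on complex Hilbert spaces H, H₁, H₂. Let A : H →L[ℂ] H₁ and B : H →L[ℂ] H₂ be bounded Γ-equivariant operators with B surjective. Then there exist continuous linear equivalences 𝓘 : (ker B) × H₂ ≃L[ℂ] H and 𝓙 : H₁ × H₂ ≃L[ℂ] H₁ × H₂ such that (i) 𝓙((A(𝓘(u, w)), B(𝓘(u, w)))) = (A u, w) for all u ∈ ker B and w ∈ H₂, and (ii) 𝓘 and 𝓙 are Γ-equivariant, where ker B carries the restriction of ρ (which leaves ker B invariant), (ker B) × H₂ and H₁ × H₂ carry the product actions, and H carries ρ. -/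
/-!
Restricting `B` to `(ker B)ᗮ` gives a bijection, so by the open mapping theorem `B` has a bounded
right inverse `S` with values in `(ker B)ᗮ`. Unitaries intertwined by `B` preserve `ker B`, hence
`(ker B)ᗮ`, and so `S` is equivariant: among all right inverses it is singled out by `B` and the
inner product alone. Then `I (u, w) = u + S w` straightens `B`, and `(A, B) ∘ I` sends `(u, w)` to
`(A u + A (S w), w)`, whose off-diagonal block is removed by the shear
`J (y, z) = (y - A (S z), z)`.
-/

section Splitting

variable {R M M₁ M₂ : Type*} [Ring R]
  [AddCommGroup M] [Module R M] [TopologicalSpace M] [IsTopologicalAddGroup M]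
  [AddCommGroup M₁] [Module R M₁] [TopologicalSpace M₁] [IsTopologicalAddGroup M₁]
  [AddCommGroup M₂] [Module R M₂] [TopologicalSpace M₂]

/-- The splitting `(u, w) ↦ u + S w` of a topological module along a continuous right inverse `S`
of `B`: Mathlib's `ContinuousLinearEquiv.equivOfRightInverse`, inverted and with the kernel as the
first factor. -/
def kerProdEquivOfRightInverse (B : M →L[R] M₂) (S : M₂ →L[R] M)
    (hS : Function.RightInverse S B) : (B.ker × M₂) ≃L[R] M :=
  (ContinuousLinearEquiv.prodComm R B.ker M₂).trans
    (ContinuousLinearEquiv.equivOfRightInverse B S hS).symm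

theorem kerProdEquivOfRightInverse_apply (B : M →L[R] M₂) (S : M₂ →L[R] M)
    (hS : Function.RightInverse S B) (u : B.ker) (w : M₂) :
    kerProdEquivOfRightInverse B S hS (u, w) = u + S w := by
  simp [kerProdEquivOfRightInverse, add_comm]

/-- The shear `(y, z) ↦ (y + T z, z)` of a product, given by the upper triangular block matrix with
identities on the diagonal and `T` above it. -/
def fstShear (T : M₂ →L[R] M₁) : (M₁ × M₂) ≃L[R] (M₁ × M₂) :=
  (ContinuousLinearEquiv.prodComm R M₁ M₂).trans
    (((ContinuousLinearEquiv.refl R M₂).skewProd (ContinuousLinearEquiv.refl R M₁) T).trans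
      (ContinuousLinearEquiv.prodComm R M₂ M₁))

theorem fstShear_apply (T : M₂ →L[R] M₁) (p : M₁ × M₂) : fstShear T p = (p.1 + T p.2, p.2) :=
  rfl

theorem fstShear_kerProdEquivOfRightInverse (A : M →L[R] M₁) (B : M →L[R] M₂) (S : M₂ →L[R] M)
    (hS : Function.RightInverse S B) (u : B.ker) (w : M₂) :
    fstShear (-(A.comp S)) (A (kerProdEquivOfRightInverse B S hS (u, w)),
      B (kerProdEquivOfRightInverse B S hS (u, w))) = (A u, w) := by
  have hu : B u = 0 := u.2
  simp [kerProdEquivOfRightInverse_apply, fstShear_apply, hu, hS w]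

end Splitting

section OrthogonalRightInverse

variable {𝕜 E F : Type*} [RCLike 𝕜] [NormedAddCommGroup E] [InnerProductSpace 𝕜 E]

theorem map_mem_orthogonal_ker_of_intertwines [AddCommGroup F] [Module 𝕜 F] {B : E →ₗ[𝕜] F}
    {U : E ≃ₗᵢ[𝕜] E} {V : F ≃ₗ[𝕜] F} (hUV : ∀ x, B (U x) = V (B x)) {x : E} (hx : x ∈ B.kerᗮ) :
    U x ∈ B.kerᗮ := by
  intro u hu
  have hu' : U.symm u ∈ B.ker := by
    have : V (B (U.symm u)) = 0 := by rw [← hUV, U.apply_symm_apply, hu]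
    simpa using this
  rw [← U.apply_symm_apply u, U.inner_map_map]
  exact hx _ hu'

variable [CompleteSpace E] [NormedAddCommGroup F] [NormedSpace 𝕜 F]

theorem bijective_domRestrict_orthogonal_ker {B : E →L[𝕜] F} (hB : Function.Surjective B) :
    Function.Bijective (B.domRestrict B.kerᗮ) := by
  have : CompleteSpace B.ker := B.isClosed_ker.completeSpace_coe
  have hcompl : IsCompl B.kerᗮ B.ker := B.ker.isCompl_orthogonal.symm
  exact ⟨LinearMap.injective_domRestrict_iff.2 hcompl.disjoint,
    (LinearMap.surjective_domRestrict_iff hB).2 hcompl.codisjoint⟩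

variable [CompleteSpace F]

/-- The isomorphism `(ker B)ᗮ ≃ F` induced by a surjective bounded operator `B : E → F` on a Hilbert
space, bicontinuous by the open mapping theorem. -/
noncomputable def orthogonalKerEquiv (B : E →L[𝕜] F) (hB : Function.Surjective B) :
    B.kerᗮ ≃L[𝕜] F :=
  ContinuousLinearEquiv.ofBijective (B.domRestrict B.kerᗮ)
    (LinearMap.ker_eq_bot.2 (bijective_domRestrict_orthogonal_ker hB).injective)
    (LinearMap.range_eq_top.2 (bijective_domRestrict_orthogonal_ker hB).surjective)

/-- The right inverse of a surjective bounded operator `B` on a Hilbert space that takes its values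
in `(ker B)ᗮ`, i.e. the Moore–Penrose inverse of `B`. -/
noncomputable def orthogonalRightInverse (B : E →L[𝕜] F) (hB : Function.Surjective B) : F →L[𝕜] E :=
  B.kerᗮ.subtypeL.comp (orthogonalKerEquiv B hB).symm.toContinuousLinearMap

variable {B : E →L[𝕜] F} (hB : Function.Surjective B)

theorem orthogonalRightInverse_mem (w : F) : orthogonalRightInverse B hB w ∈ B.kerᗮ :=
  ((orthogonalKerEquiv B hB).symm w).2

theorem rightInverse_orthogonalRightInverse :
    Function.RightInverse (orthogonalRightInverse B hB) B :=
  (orthogonalKerEquiv B hB).apply_symm_apply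

theorem orthogonalRightInverse_apply_of_mem {x : E} (hx : x ∈ B.kerᗮ) :
    orthogonalRightInverse B hB (B x) = x :=
  congrArg Subtype.val ((orthogonalKerEquiv B hB).symm_apply_apply ⟨x, hx⟩)

theorem orthogonalRightInverse_intertwines {U : E ≃ₗᵢ[𝕜] E} {V : F ≃ₗ[𝕜] F}
    (hUV : ∀ x, B (U x) = V (B x)) (w : F) :
    orthogonalRightInverse B hB (V w) = U (orthogonalRightInverse B hB w) := by
  set x := orthogonalRightInverse B hB w
  have hx : U x ∈ B.kerᗮ :=
    map_mem_orthogonal_ker_of_intertwines hUV (orthogonalRightInverse_mem hB w)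
  calc orthogonalRightInverse B hB (V w)
      = orthogonalRightInverse B hB (B (U x)) := by
        rw [hUV, rightInverse_orthogonalRightInverse hB w]
    _ = U x := orthogonalRightInverse_apply_of_mem hB hx

end OrthogonalRightInverse

theorem exists_gamma_equivariant_operator_isomorphisms_general
    {𝕜 Γ H H₁ H₂ : Type*} [RCLike 𝕜]
    [NormedAddCommGroup H] [InnerProductSpace 𝕜 H] [CompleteSpace H]
    [AddCommGroup H₁] [Module 𝕜 H₁] [TopologicalSpace H₁] [IsTopologicalAddGroup H₁]
    [NormedAddCommGroup H₂] [NormedSpace 𝕜 H₂] [CompleteSpace H₂]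
    (ρ : Γ → H ≃ₗᵢ[𝕜] H) (ρ₁ : Γ → H₁ →ₗ[𝕜] H₁) (ρ₂ : Γ → H₂ ≃ₗ[𝕜] H₂)
    (A : H →L[𝕜] H₁) (B : H →L[𝕜] H₂)
    (hA : ∀ (γ : Γ) (x : H), A (ρ γ x) = ρ₁ γ (A x))
    (hB : ∀ (γ : Γ) (x : H), B (ρ γ x) = ρ₂ γ (B x))
    (hBsurj : Function.Surjective B) :
    ∃ (I : (B.ker × H₂) ≃L[𝕜] H) (J : (H₁ × H₂) ≃L[𝕜] (H₁ × H₂)),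
      (∀ (u : B.ker) (w : H₂), J (A (I (u, w)), B (I (u, w))) = (A u, w)) ∧
      (∀ (γ : Γ) (u u' : B.ker) (w : H₂), (u' : H) = ρ γ u → I (u', ρ₂ γ w) = ρ γ (I (u, w))) ∧
      (∀ (γ : Γ) (p : H₁ × H₂), J (ρ₁ γ p.1, ρ₂ γ p.2) = (ρ₁ γ (J p).1, ρ₂ γ (J p).2)) := by
  let S := orthogonalRightInverse B hBsurj
  have hS : Function.RightInverse S B := rightInverse_orthogonalRightInverse hBsurj
  have hSρ (γ : Γ) (w : H₂) : S (ρ₂ γ w) = ρ γ (S w) :=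
    orthogonalRightInverse_intertwines hBsurj (hB γ) w
  refine ⟨kerProdEquivOfRightInverse B S hS, fstShear (-(A.comp S)),
    fstShear_kerProdEquivOfRightInverse A B S hS, fun γ u u' w hu => ?_, fun γ p => ?_⟩
  · simp only [kerProdEquivOfRightInverse_apply, hu, hSρ, map_add]
  · simp [fstShear_apply, hSρ, hA]

/-- for bounded `Γ`-equivariant operators `A : H → H₁`, `B : H → H₂`
with `B` surjective, there are `Γ`-equivariant continuous linear equivalences
`𝓘 : ker B × H₂ ≃ H` and `𝓙 : H₁ × H₂ ≃ H₁ × H₂` with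
`𝓙 (A (𝓘 (u, w)), B (𝓘 (u, w))) = (A u, w)`. -/
theorem exists_gamma_equivariant_operator_isomorphisms
    {Γ : Type*} [Group Γ]
    {H H₁ H₂ : Type*}
    [NormedAddCommGroup H] [InnerProductSpace ℂ H] [CompleteSpace H]
    [NormedAddCommGroup H₁] [InnerProductSpace ℂ H₁] [CompleteSpace H₁]
    [NormedAddCommGroup H₂] [InnerProductSpace ℂ H₂] [CompleteSpace H₂]
    (ρ : Γ →* (H ≃ₗᵢ[ℂ] H)) (ρ₁ : Γ →* (H₁ ≃ₗᵢ[ℂ] H₁)) (ρ₂ : Γ →* (H₂ ≃ₗᵢ[ℂ] H₂))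
    (A : H →L[ℂ] H₁) (B : H →L[ℂ] H₂)
    (hA : ∀ (γ : Γ) (x : H), A (ρ γ x) = ρ₁ γ (A x))
    (hB : ∀ (γ : Γ) (x : H), B (ρ γ x) = ρ₂ γ (B x))
    (hBsurj : Function.Surjective B) :
    ∃ (I : (LinearMap.ker (B : H →ₗ[ℂ] H₂) × H₂) ≃L[ℂ] H) (J : (H₁ × H₂) ≃L[ℂ] (H₁ × H₂)),
      (∀ (u : LinearMap.ker (B : H →ₗ[ℂ] H₂)) (w : H₂),
        J (A (I (u, w)), B (I (u, w))) = (A (u : H), w)) ∧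
      (∀ (γ : Γ) (u u' : LinearMap.ker (B : H →ₗ[ℂ] H₂)) (w : H₂), (u' : H) = ρ γ (u : H) →
        I (u', ρ₂ γ w) = ρ γ (I (u, w))) ∧
      (∀ (γ : Γ) (p : H₁ × H₂),
        J (ρ₁ γ p.1, ρ₂ γ p.2) = (ρ₁ γ (J p).1, ρ₂ γ (J p).2)) := by
  exact exists_gamma_equivariant_operator_isomorphisms_general ρ (fun γ => (ρ₁ γ).toLinearEquiv)
    (fun γ => (ρ₂ γ).toLinearEquiv) A B hA hB hBsurj
end

section
/- Let H, H₁, H₂ be complex Hilbert spaces, and A : H →L[ℂ] H₁, B : H →L[ℂ] H₂ bounded linear operators with B surjective. Then the range of the restriction A|_{ker B} : ker B → H₁ is closed in H₁ if and only if the range of the operator A ⊕ B : H →L[ℂ] H₁ × H₂, x ↦ (A x, B x), is closed in H₁ × H₂. -/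
/-!
Restricting `range (A ⊕ B)` to the slice `{(y, 0)}` gives `A (ker B)`, so closedness of the former
passes to the latter. Conversely `(y, B u)` lies in `range (A ⊕ B)` iff `y - A u ∈ A (ker B)`, so
the preimage of `range (A ⊕ B)` under `id × B` is closed whenever `A (ker B)` is; since `B` is open
and surjective, `id × B` is a quotient map and `range (A ⊕ B)` itself is closed.
-/

open LinearMap (range ker)
open Topology (IsQuotientMap)

theorem comap_inl_range_prod {R M M₁ M₂ : Type*} [Semiring R]
    [AddCommMonoid M] [AddCommMonoid M₁] [AddCommMonoid M₂] [Module R M] [Module R M₁] [Module R M₂]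
    (f : M →ₗ[R] M₁) (g : M →ₗ[R] M₂) :
    (range (f.prod g)).comap (LinearMap.inl R M₁ M₂) = (ker g).map f := by
  ext y
  simp [and_comm]

theorem comap_prodMap_id_range_prod {R M M₁ M₂ : Type*} [Ring R]
    [AddCommGroup M] [AddCommGroup M₁] [AddCommGroup M₂] [Module R M] [Module R M₁] [Module R M₂]
    (f : M →ₗ[R] M₁) (g : M →ₗ[R] M₂) :
    (range (f.prod g)).comap (LinearMap.prodMap LinearMap.id g) =
      ((ker g).map f).comap (LinearMap.fst R M₁ M - f ∘ₗ LinearMap.snd R M₁ M) := by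
  ext ⟨y, u⟩
  constructor
  · rintro ⟨x, hx⟩
    obtain ⟨hfx, hgx⟩ : f x = y ∧ g x = g u := Prod.ext_iff.mp hx
    exact ⟨x - u, by simp [hgx], by simp [hfx]⟩
  · rintro ⟨k, hgk : g k = 0, hfk : f k = y - f u⟩
    exact ⟨k + u, by simp [hgk, hfk]⟩

theorem range_restriction_closed_iff_range_prod_closed_general {R E F G : Type*} [Ring R]
    [AddCommGroup E] [Module R E] [TopologicalSpace E]
    [AddCommGroup F] [Module R F] [TopologicalSpace F] [IsTopologicalAddGroup F]
    [AddCommGroup G] [Module R G] [TopologicalSpace G]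
    (A : E →L[R] F) (B : E →L[R] G) (hB : IsOpenQuotientMap B) :
    IsClosed (range (A.comp (ker B.toLinearMap).subtypeL).toLinearMap : Set F) ↔
      IsClosed (range (A.prod B).toLinearMap : Set (F × G)) := by
  have range_restriction : range (A.comp (ker B.toLinearMap).subtypeL).toLinearMap =
      (ker B.toLinearMap).map A.toLinearMap := LinearMap.range_domRestrict _ _
  rw [range_restriction]
  constructor
  · intro hclosed
    have hquot : IsQuotientMap (Prod.map (id : F → F) B) :=
      (IsOpenQuotientMap.id.prodMap hB).isQuotientMap
    rw [← hquot.isClosed_preimage]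
    have hcont : Continuous fun p : F × E ↦ p.1 - A p.2 := by fun_prop
    change IsClosed (((range (A.toLinearMap.prod B.toLinearMap)).comap
      (LinearMap.prodMap LinearMap.id B.toLinearMap) : Submodule R (F × E)) : Set (F × E))
    rw [comap_prodMap_id_range_prod]
    exact hclosed.preimage hcont
  · intro hclosed
    rw [← comap_inl_range_prod]
    exact hclosed.preimage (ContinuousLinearMap.inl R F G).continuous

/-- for bounded operators `A : H → H₁`, `B : H → H₂` between complex
Hilbert spaces with `B` surjective, the range of `A|_{ker B}` is closed iff the range
of `A ⊕ B : x ↦ (A x, B x)` is closed. -/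
theorem range_restriction_closed_iff_range_prod_closed
    {H H₁ H₂ : Type*}
    [NormedAddCommGroup H] [InnerProductSpace ℂ H] [CompleteSpace H]
    [NormedAddCommGroup H₁] [InnerProductSpace ℂ H₁] [CompleteSpace H₁]
    [NormedAddCommGroup H₂] [InnerProductSpace ℂ H₂] [CompleteSpace H₂]
    (A : H →L[ℂ] H₁) (B : H →L[ℂ] H₂) (hBsurj : Function.Surjective B) :
    IsClosed (LinearMap.range (A.comp (LinearMap.ker B.toLinearMap).subtypeL).toLinearMap : Set H₁) ↔
      IsClosed (LinearMap.range (A.prod B).toLinearMap : Set (H₁ × H₂)) := by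
  exact range_restriction_closed_iff_range_prod_closed_general A B
    ⟨hBsurj, B.continuous, B.isOpenMap hBsurj⟩
end

section
/- Let Γ be a group with unitary representations ρ, ρ₁, ρ₂ on complex Hilbert spaces H, H₁, H₂, and let A : H →L[ℂ] H₁, B : H →L[ℂ] H₂ be bounded Γ-equivariant operators with B surjective. Assume the range of A|_{ker B} is closed in H₁ (equivalently, the range of A ⊕ B is closed in H₁ × H₂). Then there exists a Γ-equivariant continuous linear equivalence between the orthogonal complement of range(A|_{ker B}) in H₁ and the orthogonal complement of range(A ⊕ B) in H₁ × H₂, where these orthogonal complements carry the restrictions of ρ₁ and of the product representation ρ₁ × ρ₂ respectively (both subspaces being Γ-invariant). -/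
noncomputable section

variable {H H₁ H₂ : Type*}
  [NormedAddCommGroup H] [InnerProductSpace ℂ H] [CompleteSpace H]
  [NormedAddCommGroup H₁] [InnerProductSpace ℂ H₁] [CompleteSpace H₁]
  [NormedAddCommGroup H₂] [InnerProductSpace ℂ H₂] [CompleteSpace H₂]

/-- The range of the restriction `A|_{ker B}`, as a subspace of `H₁`. -/
def rangeRestriction (A : H →L[ℂ] H₁) (B : H →L[ℂ] H₂) : Submodule ℂ H₁ :=
  LinearMap.range (A.comp (LinearMap.ker B.toLinearMap).subtypeL).toLinearMap

/-- The range of `A ⊕ B : x ↦ (A x, B x)`, as a subspace of the Hilbert-space product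
`WithLp 2 (H₁ × H₂)` (the product `H₁ × H₂` with the `ℓ²`-norm and inner product). -/
def rangeProd (A : H →L[ℂ] H₁) (B : H →L[ℂ] H₂) : Submodule ℂ (WithLp 2 (H₁ × H₂)) :=
  LinearMap.range ((WithLp.linearEquiv 2 ℂ (H₁ × H₂)).symm.toLinearMap ∘ₗ
    (A.prod B : H →ₗ[ℂ] H₁ × H₂))

/-! A vector `(u, w)` is orthogonal to every `(A x, B x)` exactly when `A† u + B† w = 0`. A bounded
right inverse `S` of `B` makes `S†` a left inverse of `B†` whose composite `B† ∘ S†` is the identity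
on `(ker B)ᗮ`, so this equation says that `A† u ∈ (ker B)ᗮ`, i.e. `u` is orthogonal to `A (ker B)`,
and that `w = -S† A† u`. Hence the complement of `range (A ⊕ B)` is the graph of a bounded operator
over the complement of `A (ker B)`. The equivalence is the inverse of the first projection, which
does not depend on `S`, and therefore it commutes with every symmetry of the pair `(A, B)`. -/

open Function
open scoped InnerProduct InnerProductSpace

section RightInverse

variable {𝕜 E F : Type*}

theorem hasRightInverse_of_surjective_of_closedComplemented_ker [NontriviallyNormedField 𝕜]
    [NormedAddCommGroup E] [NormedSpace 𝕜 E] [CompleteSpace E]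
    [NormedAddCommGroup F] [NormedSpace 𝕜 F] [CompleteSpace F]
    {T : E →L[𝕜] F} (hT : Surjective T) (hker : T.ker.ClosedComplemented) :
    T.HasRightInverse := by
  obtain ⟨P, hP⟩ := hker
  have : CompleteSpace T.ker := T.isClosed_ker.completeSpace_coe
  let Φ : E ≃L[𝕜] F × T.ker := T.equivProdOfSurjectiveOfIsCompl P
    (LinearMap.range_eq_top.2 hT) (LinearMap.range_eq_of_proj hP) (LinearMap.isCompl_of_proj hP)
  exact ⟨(Φ.symm : F × T.ker →L[𝕜] E) ∘L .inl 𝕜 F T.ker,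
    fun y ↦ congrArg Prod.fst (Φ.apply_symm_apply (y, 0))⟩

variable [RCLike 𝕜] [NormedAddCommGroup E] [InnerProductSpace 𝕜 E] [CompleteSpace E]

theorem hasRightInverse_of_surjective [NormedAddCommGroup F] [NormedSpace 𝕜 F] [CompleteSpace F]
    {T : E →L[𝕜] F} (hT : Surjective T) : T.HasRightInverse := by
  have : CompleteSpace T.ker := T.isClosed_ker.completeSpace_coe
  exact hasRightInverse_of_surjective_of_closedComplemented_ker hT
    ⟨T.ker.orthogonalProjectionOnto, T.ker.orthogonalProjectionOnto_mem_subspace_eq_self⟩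

variable [NormedAddCommGroup F] [InnerProductSpace 𝕜 F] [CompleteSpace F]
  {T : E →L[𝕜] F} {S : F →L[𝕜] E}

theorem leftInverse_adjoint_of_rightInverse (hS : RightInverse S T) : LeftInverse (S†) (T†) :=
  fun y ↦ ext_inner_left 𝕜 fun z ↦ by
    rw [ContinuousLinearMap.adjoint_inner_right, ContinuousLinearMap.adjoint_inner_right, hS z]

theorem adjoint_apply_adjoint_of_mem_orthogonal_ker (hS : RightInverse S T) {w : E}
    (hw : w ∈ T.kerᗮ) : (T†) ((S†) w) = w := by
  refine ext_inner_left 𝕜 fun x ↦ ?_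
  have hx : x - S (T x) ∈ T.ker := by simp [hS (T x)]
  have hinner : ⟪x - S (T x), w⟫_𝕜 = 0 := Submodule.inner_right_of_mem_orthogonal hx hw
  rw [inner_sub_left, sub_eq_zero] at hinner
  rw [ContinuousLinearMap.adjoint_inner_right, ContinuousLinearMap.adjoint_inner_right, hinner]

end RightInverse

section Graph

variable {R E F : Type*} {q : ENNReal} [Semiring R]
  [AddCommGroup E] [Module R E] [TopologicalSpace E] [AddCommGroup F] [Module R F]
  [TopologicalSpace F] {K : Submodule R E} {L : Submodule R (WithLp q (E × F))}

/-- The equivalence `u ↦ (u, W u)` from a subspace `K` onto the graph `L` of `W` over `K`, inverse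
to the first projection. -/
def graphEquiv (W : E →L[R] F) (hL : ∀ p, p ∈ L ↔ p.fst ∈ K ∧ p.snd = W p.fst) : K ≃L[R] L where
  toFun u := ⟨WithLp.toLp q (u, W u), (hL _).2 ⟨u.2, rfl⟩⟩
  invFun p := ⟨p.1.fst, ((hL _).1 p.2).1⟩
  map_add' u v := Subtype.ext <| WithLp.ofLp_injective q <| by simp
  map_smul' c u := Subtype.ext <| WithLp.ofLp_injective q <| by simp
  left_inv _ := rfl
  right_inv p := Subtype.ext <| WithLp.ofLp_injective q <| Prod.ext rfl ((hL _).1 p.2).2.symm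
  continuous_toFun := by fun_prop
  continuous_invFun := by fun_prop

theorem fst_graphEquiv (W : E →L[R] F) (hL : ∀ p, p ∈ L ↔ p.fst ∈ K ∧ p.snd = W p.fst) (u : K) :
    (graphEquiv W hL u).1.fst = u := rfl

theorem graphEquiv_eq_of_fst_eq (W : E →L[R] F) (hL : ∀ p, p ∈ L ↔ p.fst ∈ K ∧ p.snd = W p.fst)
    {u : K} {p : WithLp q (E × F)} (hp : p ∈ L) (hfst : p.fst = u) :
    (graphEquiv W hL u : WithLp q (E × F)) = p := by
  have hu : (⟨p.fst, ((hL p).1 hp).1⟩ : K) = u := Subtype.ext hfst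
  rw [← hu]
  exact congrArg Subtype.val ((graphEquiv W hL).apply_symm_apply ⟨p, hp⟩)

end Graph

section Complements

variable {E E₁ E₂ : Type*} [NormedAddCommGroup E] [InnerProductSpace ℂ E]
  [NormedAddCommGroup E₁] [InnerProductSpace ℂ E₁] [NormedAddCommGroup E₂] [InnerProductSpace ℂ E₂]
  {A : E →L[ℂ] E₁} {B : E →L[ℂ] E₂}

theorem mem_orthogonal_rangeRestriction_iff_adjoint [CompleteSpace E] [CompleteSpace E₁] {u : E₁} :
    u ∈ (rangeRestriction A B)ᗮ ↔ (A†) u ∈ B.kerᗮ := by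
  simp [rangeRestriction, Submodule.mem_orthogonal, ContinuousLinearMap.adjoint_inner_right]

theorem mem_orthogonal_rangeProd_iff_inner {p : WithLp 2 (E₁ × E₂)} :
    p ∈ (rangeProd A B)ᗮ ↔ ∀ x, ⟪A x, p.fst⟫_ℂ + ⟪B x, p.snd⟫_ℂ = 0 := by
  simp [rangeProd, Submodule.mem_orthogonal, WithLp.prod_inner_apply]

theorem toLp_mem_orthogonal_rangeProd_of_intertwines
    {U : E → E} {U₁ : E₁ →ₗᵢ[ℂ] E₁} {U₂ : E₂ →ₗᵢ[ℂ] E₂} (hU : Surjective U)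
    (hA : ∀ x, A (U x) = U₁ (A x)) (hB : ∀ x, B (U x) = U₂ (B x))
    {p : WithLp 2 (E₁ × E₂)} (hp : p ∈ (rangeProd A B)ᗮ) :
    WithLp.toLp 2 (U₁ p.fst, U₂ p.snd) ∈ (rangeProd A B)ᗮ := by
  rw [mem_orthogonal_rangeProd_iff_inner] at hp ⊢
  refine hU.forall.2 fun x ↦ ?_
  simpa [hA, hB] using hp x

end Complements

section ComplementEquiv

variable {A : H →L[ℂ] H₁} {B : H →L[ℂ] H₂} {S : H₂ →L[ℂ] H}

theorem mem_orthogonal_rangeProd_iff_adjoint {p : WithLp 2 (H₁ × H₂)} :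
    p ∈ (rangeProd A B)ᗮ ↔ (A†) p.fst + (B†) p.snd = 0 := by
  simp_rw [mem_orthogonal_rangeProd_iff_inner, ← ContinuousLinearMap.adjoint_inner_right,
    ← inner_add_right]
  exact ⟨fun h ↦ ext_inner_left ℂ (by simpa using h), fun h x ↦ by rw [h, inner_zero_right]⟩

theorem mem_orthogonal_rangeProd_iff_of_rightInverse (hS : RightInverse S B)
    {p : WithLp 2 (H₁ × H₂)} :
    p ∈ (rangeProd A B)ᗮ ↔
      p.fst ∈ (rangeRestriction A B)ᗮ ∧ p.snd = (-(S† ∘L A†)) p.fst := by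
  rw [mem_orthogonal_rangeProd_iff_adjoint, mem_orthogonal_rangeRestriction_iff_adjoint,
    neg_apply, ContinuousLinearMap.comp_apply]
  constructor
  · intro h
    have hA : (A†) p.fst = -(B†) p.snd := eq_neg_of_add_eq_zero_left h
    constructor
    · rw [hA, B.orthogonal_ker]
      exact neg_mem (Submodule.le_topologicalClosure _ ⟨p.snd, rfl⟩)
    · rw [hA, map_neg, neg_neg, leftInverse_adjoint_of_rightInverse hS]
  · rintro ⟨hker, hsnd⟩
    rw [hsnd, map_neg, adjoint_apply_adjoint_of_mem_orthogonal_ker hS hker, add_neg_cancel]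

variable (A) in
/-- The first projection identifies `(range (A ⊕ B))ᗮ` with `(range (A|_{ker B}))ᗮ`; this is its
inverse `u ↦ (u, -S† A† u)`, written down with a bounded right inverse `S` of `B`. -/
def orthogonalRangeEquiv (hS : RightInverse S B) :
    (rangeRestriction A B)ᗮ ≃L[ℂ] (rangeProd A B)ᗮ :=
  graphEquiv (-(S† ∘L A†)) fun _ ↦ mem_orthogonal_rangeProd_iff_of_rightInverse hS

variable {U : H → H} {U₁ : H₁ →ₗᵢ[ℂ] H₁} {U₂ : H₂ →ₗᵢ[ℂ] H₂}

theorem orthogonalRangeEquiv_apply_of_intertwines (hS : RightInverse S B) (hU : Surjective U)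
    (hA : ∀ x, A (U x) = U₁ (A x)) (hB : ∀ x, B (U x) = U₂ (B x))
    {v v' : (rangeRestriction A B)ᗮ} (hv : (v' : H₁) = U₁ v) :
    (orthogonalRangeEquiv A hS v' : WithLp 2 (H₁ × H₂)) =
      WithLp.toLp 2 (U₁ (orthogonalRangeEquiv A hS v).1.fst,
        U₂ (orthogonalRangeEquiv A hS v).1.snd) := by
  have hfst : U₁ (orthogonalRangeEquiv A hS v).1.fst = v' :=
    (congrArg U₁ (fst_graphEquiv _ _ v)).trans hv.symm
  exact graphEquiv_eq_of_fst_eq _ _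
    (toLp_mem_orthogonal_rangeProd_of_intertwines hU hA hB (orthogonalRangeEquiv A hS v).2) hfst

end ComplementEquiv

theorem equivariant_equiv_of_range_complements_general
    (A : H →L[ℂ] H₁) (B : H →L[ℂ] H₂) (hBsurj : Surjective B) :
    ∃ e : (rangeRestriction A B)ᗮ ≃L[ℂ] (rangeProd A B)ᗮ,
      ∀ (U : H → H) (U₁ : H₁ →ₗᵢ[ℂ] H₁) (U₂ : H₂ →ₗᵢ[ℂ] H₂), Surjective U →
        (∀ x, A (U x) = U₁ (A x)) → (∀ x, B (U x) = U₂ (B x)) →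
        ∀ v v' : (rangeRestriction A B)ᗮ, (v' : H₁) = U₁ v →
          (e v' : WithLp 2 (H₁ × H₂)) = WithLp.toLp 2 (U₁ (e v).1.fst, U₂ (e v).1.snd) := by
  obtain ⟨S, hS⟩ := hasRightInverse_of_surjective hBsurj
  exact ⟨orthogonalRangeEquiv A hS, fun _ _ _ hU hA hB _ _ hv ↦
    orthogonalRangeEquiv_apply_of_intertwines hS hU hA hB hv⟩

/-- for bounded `Γ`-equivariant operators `A : H → H₁`, `B : H → H₂` with
`B` surjective and `A|_{ker B}` of closed range, there is a `Γ`-equivariant continuous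
linear equivalence between the orthogonal complement of `range (A|_{ker B})` in `H₁` and
the orthogonal complement of `range (A ⊕ B)` in `H₁ × H₂` (with its Hilbert-space
structure), where the complements carry the restricted representations. -/
theorem equivariant_equiv_of_range_complements
    {Γ : Type*} [Group Γ]
    (ρ : Γ →* (H ≃ₗᵢ[ℂ] H)) (ρ₁ : Γ →* (H₁ ≃ₗᵢ[ℂ] H₁)) (ρ₂ : Γ →* (H₂ ≃ₗᵢ[ℂ] H₂))
    (A : H →L[ℂ] H₁) (B : H →L[ℂ] H₂)
    (hA : ∀ (γ : Γ) (x : H), A (ρ γ x) = ρ₁ γ (A x))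
    (hB : ∀ (γ : Γ) (x : H), B (ρ γ x) = ρ₂ γ (B x))
    (hBsurj : Function.Surjective B)
    (hclosed : IsClosed ((rangeRestriction A B : Submodule ℂ H₁) : Set H₁)) :
    ∃ e : (rangeRestriction A B)ᗮ ≃L[ℂ] (rangeProd A B)ᗮ,
      ∀ (γ : Γ) (v v' : (rangeRestriction A B)ᗮ), (v' : H₁) = ρ₁ γ (v : H₁) →
        (WithLp.equiv 2 (H₁ × H₂)) (e v' : WithLp 2 (H₁ × H₂)) =
          (ρ₁ γ ((WithLp.equiv 2 (H₁ × H₂)) (e v : WithLp 2 (H₁ × H₂))).1,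
           ρ₂ γ ((WithLp.equiv 2 (H₁ × H₂)) (e v : WithLp 2 (H₁ × H₂))).2) := by
  obtain ⟨e, he⟩ := equivariant_equiv_of_range_complements_general A B hBsurj
  exact ⟨e, fun γ v v' hv ↦ congrArg (WithLp.equiv 2 (H₁ × H₂)) <|
    he (ρ γ) (ρ₁ γ).toLinearIsometry (ρ₂ γ).toLinearIsometry (ρ γ).surjective (hA γ) (hB γ) v v' hv⟩

end
end
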